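/- arXiv:2012.15065 — 4 statements merged into one kernel-verified Lean document; each statement's English description precedes it below -/
import Mathlib

section
/- Let m ≥ 7. Suppose F_m(x) = a₁P_m(x₁) + ⋯ + aₙP_m(xₙ) with a₁ ≤ ⋯ ≤ aₙ positive integers represents every positive integer up to m-4 (i.e., for each 1 ≤ r ≤ m-4 there exists an integer vector x with F_m(x) = r). If for some i ≤ n the subform a₁P_m(x₁) + ⋯ + a_iP_m(x_i) represents each of the a₁+⋯+a_i+1 consecutive integers N, N+1, …, N+(a₁+⋯+a_i), then F_m represents each of the m-3 consecutive integers N, N+1, …, N+(m-4). -/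
/-- The generalized `m`-gonal number `P_m(x) = ((m-2)x² - (m-4)x)/2`. -/
def polygonal (m x : ℤ) : ℤ := ((m - 2) * x ^ 2 - (m - 4) * x) / 2

theorem polygonal_cases (m : ℤ) (hm : 7 ≤ m) (x : ℤ) :
    0 ≤ polygonal m x ∧ (polygonal m x ≤ 1 ∨ m - 3 ≤ polygonal m x) := by
  have key : x = 0 ∨ x = 1 ∨ m - 3 ≤ polygonal m x := by
    by_cases h0 : x = 0
    · exact Or.inl h0
    by_cases h1 : x = 1
    · exact Or.inr (Or.inl h1)
    refine Or.inr (Or.inr ?_)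
    unfold polygonal
    rw [Int.le_ediv_iff_mul_le (by norm_num)]
    rcases lt_or_ge x 0 with h | h
    · obtain ⟨t, rfl⟩ : ∃ t, x = -1 - t := ⟨-1 - x, by ring⟩
      have ht : 0 ≤ t := by omega
      have hmt : 0 ≤ (m - 7) * t := mul_nonneg (by omega) ht
      have hmt2 : 0 ≤ (m - 7) * t ^ 2 := mul_nonneg (by omega) (sq_nonneg t)
      nlinarith [sq_nonneg t]
    · obtain ⟨t, rfl⟩ : ∃ t, x = 2 + t := ⟨x - 2, by ring⟩
      have ht : 0 ≤ t := by omega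
      have hmt : 0 ≤ (m - 7) * t := mul_nonneg (by omega) ht
      have hmt2 : 0 ≤ (m - 7) * t ^ 2 := mul_nonneg (by omega) (sq_nonneg t)
      nlinarith [sq_nonneg t]
  rcases key with h | h | h
  · subst h
    simp [polygonal]
  · subst h
    have : polygonal m 1 = 1 := by
      unfold polygonal
      ring_nf
      norm_num
    omega
  · exact ⟨by omega, Or.inr h⟩

theorem consecutive_rep_extends (m : ℤ) (hm : 7 ≤ m) (n : ℕ)
    (a : Fin n → ℤ) (hpos : ∀ k, 0 < a k) (hmono : Monotone a)
    (hrep : ∀ r : ℤ, 1 ≤ r → r ≤ m - 4 →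
      ∃ x : Fin n → ℤ, ∑ k, a k * polygonal m (x k) = r)
    (i : ℕ) (hi : i ≤ n) (N : ℤ)
    (hsub : ∀ j : ℤ, N ≤ j →
      j ≤ N + ∑ k ∈ Finset.univ.filter (fun k : Fin n => (k : ℕ) < i), a k →
      ∃ x : Fin n → ℤ,
        ∑ k ∈ Finset.univ.filter (fun k : Fin n => (k : ℕ) < i),
          a k * polygonal m (x k) = j) :
    ∀ j : ℤ, N ≤ j → j ≤ N + (m - 4) →
      ∃ x : Fin n → ℤ, ∑ k, a k * polygonal m (x k) = j := by
  classical
  intro j hj1 hj2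
  have hx : ∃ x : Fin n → ℤ, ∑ k, a k * polygonal m (x k) = j - N := by
    rcases hj1.eq_or_lt with h | h
    · exact ⟨fun _ => 0, by simp [polygonal, h]⟩
    · exact hrep _ (by omega) (by omega)
  obtain ⟨x, hx⟩ := hx
  have hnn : ∀ k, 0 ≤ a k * polygonal m (x k) := fun k =>
    mul_nonneg (hpos k).le (polygonal_cases m hm (x k)).1
  have hle : ∀ k, a k * polygonal m (x k) ≤ a k := by
    intro k
    have h1 : a k * polygonal m (x k) ≤ j - N := by
      rw [← hx]
      exact Finset.single_le_sum (f := fun k => a k * polygonal m (x k))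
        (fun k _ => hnn k) (Finset.mem_univ k)
    obtain ⟨h0, h | h⟩ := polygonal_cases m hm (x k)
    · nlinarith [hpos k]
    · nlinarith [hpos k]
  have hsplit := Finset.sum_filter_add_sum_filter_not (M := ℤ) Finset.univ
    (fun k : Fin n => (k : ℕ) < i)
  have hlow := Finset.sum_nonneg (s := Finset.univ.filter (fun k : Fin n => (k : ℕ) < i))
    (fun k _ => hnn k)
  have hup := Finset.sum_le_sum (s := Finset.univ.filter (fun k : Fin n => (k : ℕ) < i))
    (fun k _ => hle k)
  obtain ⟨z, hz⟩ := hsub (N + ∑ k ∈ Finset.univ.filter (fun k : Fin n => (k : ℕ) < i),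
    a k * polygonal m (x k)) (by omega) (by omega)
  refine ⟨fun k => if (k : ℕ) < i then z k else x k, ?_⟩
  have e1 := hsplit (fun k => a k * polygonal m (x k))
  rw [← hsplit]
  have e2 : ∑ k ∈ Finset.univ.filter (fun k : Fin n => (k : ℕ) < i),
      a k * polygonal m (if (k : ℕ) < i then z k else x k) =
      ∑ k ∈ Finset.univ.filter (fun k : Fin n => (k : ℕ) < i), a k * polygonal m (z k) := by
    refine Finset.sum_congr rfl fun k hk => ?_
    rw [if_pos (Finset.mem_filter.mp hk).2]
  have e3 : ∑ k ∈ Finset.univ.filter (fun k : Fin n => ¬ (k : ℕ) < i),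
      a k * polygonal m (if (k : ℕ) < i then z k else x k) =
      ∑ k ∈ Finset.univ.filter (fun k : Fin n => ¬ (k : ℕ) < i), a k * polygonal m (x k) := by
    refine Finset.sum_congr rfl fun k hk => ?_
    rw [if_neg (Finset.mem_filter.mp hk).2]
  rw [e2, e3, hz]
  linarith
end

section
/- Let m ≥ 3 and let A ≥ 0, B be integers with 8A + 4B - B² ≥ 0 and such that 8A + 4B - B² is not of the form 4^l(8k+7) for any nonnegative integers l, k. Then there exist integers x₁, x₂, x₃, x₄ with P_m(x₁) + P_m(x₂) + P_m(x₃) + P_m(x₄) = A(m-2) + B. -/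
/-- Sum of three integer squares. -/
def SumThree (n : ℤ) : Prop := ∃ u v w : ℤ, n = u ^ 2 + v ^ 2 + w ^ 2

/-- A ternary quadratic form. -/
def TQ (a b c d e f x y z : ℤ) : ℤ :=
  a * x ^ 2 + b * y ^ 2 + c * z ^ 2 + 2 * d * x * y + 2 * e * x * z + 2 * f * y * z

theorem exists_round (E D : ℤ) (hD : 0 < D) : ∃ k : ℤ, |2 * (E + k * D)| ≤ D := by
  refine ⟨-((2 * E + D) / (2 * D)), ?_⟩
  have h1 := Int.mul_ediv_add_emod (2 * E + D) (2 * D)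
  have h2 := Int.emod_nonneg (2 * E + D) (show 2 * D ≠ 0 by omega)
  have h3 := Int.emod_lt_of_pos (2 * E + D) (show 0 < 2 * D by omega)
  rw [abs_le]
  constructor <;> nlinarith

theorem tern_reduced (a b c d e f : ℤ) (ha : 0 < a) (hD : 0 < a * b - d ^ 2)
    (hdet : a * b * c + 2 * d * e * f - a * f ^ 2 - b * e ^ 2 - c * d ^ 2 = 1)
    (hd : |2 * d| ≤ a) (hE : |2 * (a * f - d * e)| ≤ a * b - d ^ 2)
    (hba : a ≤ b) (hF : a * b - d ^ 2 ≤ a * c - e ^ 2) (x y z : ℤ) :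
    SumThree (TQ a b c d e f x y z) := by
  obtain ⟨D, hDd⟩ : ∃ D, D = a * b - d ^ 2 := ⟨_, rfl⟩
  obtain ⟨E, hEd⟩ : ∃ E, E = a * f - d * e := ⟨_, rfl⟩
  obtain ⟨F, hFd⟩ : ∃ F, F = a * c - e ^ 2 := ⟨_, rfl⟩
  have hDF : D * F - E ^ 2 = a := by
    rw [hDd, hEd, hFd]; linear_combination a * hdet
  rw [← hDd] at hD hE hF
  rw [← hEd] at hE
  rw [← hFd] at hF
  have hE2 : (2 * E) ^ 2 ≤ D ^ 2 := sq_le_sq' (by linarith [abs_le.1 hE]) (abs_le.1 hE).2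
  have hd2 : (2 * d) ^ 2 ≤ a ^ 2 := sq_le_sq' (by linarith [abs_le.1 hd]) (abs_le.1 hd).2
  have h1 : 3 * D ^ 2 ≤ 4 * a := by nlinarith
  have h2 : 3 * a ^ 2 ≤ 4 * D := by nlinarith
  have ha1 : a = 1 := by
    by_contra hne
    have ha2 : 2 ≤ a := by omega
    have : a ≤ D := by
      by_contra hlt
      nlinarith
    nlinarith
  subst ha1
  have hD1 : D = 1 := by nlinarith
  subst hD1
  have hd0 : d = 0 := by have := abs_le.1 hd; omega
  have hE0 : E = 0 := by have := abs_le.1 hE; omega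
  subst hd0 hE0
  have hb : b = 1 := by linarith
  have hf : f = 0 := by linarith
  have hc : c = 1 + e ^ 2 := by linarith
  subst hb hf hc
  exact ⟨x + e * z, y, z, by unfold TQ; ring⟩

theorem tern_all (N : ℕ) : ∀ a b c d e f : ℤ, 0 < a → 0 < a * b - d ^ 2 →
    a * b * c + 2 * d * e * f - a * f ^ 2 - b * e ^ 2 - c * d ^ 2 = 1 →
    a + (a * b - d ^ 2) ≤ N → ∀ x y z, SumThree (TQ a b c d e f x y z) := by
  induction N with
  | zero => intro a b c d e f ha hD _ hN; push_cast at hN; omega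
  | succ N ih =>
    -- first the reduced case
    have red : ∀ a b c d e f : ℤ, 0 < a → 0 < a * b - d ^ 2 →
        a * b * c + 2 * d * e * f - a * f ^ 2 - b * e ^ 2 - c * d ^ 2 = 1 →
        a + (a * b - d ^ 2) ≤ N + 1 → |2 * d| ≤ a →
        |2 * (a * f - d * e)| ≤ a * b - d ^ 2 →
        ∀ x y z, SumThree (TQ a b c d e f x y z) := by
      intro a b c d e f ha hD hdet hN hd hE x y z
      by_cases hba : a ≤ b
      · by_cases hF : a * b - d ^ 2 ≤ a * c - e ^ 2
        · exact tern_reduced a b c d e f ha hD hdet hd hE hba hF x y z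
        · have hF' : 0 < a * c - e ^ 2 := by
            have hDF : (a * b - d ^ 2) * (a * c - e ^ 2) - (a * f - d * e) ^ 2 = a := by
              linear_combination a * hdet
            have : 0 < (a * b - d ^ 2) * (a * c - e ^ 2) := by
              nlinarith [sq_nonneg (a * f - d * e)]
            exact pos_of_mul_pos_right this hD.le
          have := ih a c b e d f ha hF' (by linear_combination hdet) (by omega) x z y
          convert this using 1
          unfold TQ; ring
      · have hb : 0 < b := by
          have : 0 < a * b := by nlinarith [sq_nonneg d]
          exact pos_of_mul_pos_right this ha.le
        have := ih b a c d f e hb (by linarith) (by linear_combination hdet)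
          (by rw [mul_comm b a]; omega) y x z
        convert this using 1
        unfold TQ; ring
    intro a b c d e f ha hD hdet hN x y z
    push_cast at hN
    obtain ⟨k, hk⟩ := exists_round (a * f - d * e) (a * b - d ^ 2) hD
    obtain ⟨j, hj⟩ := exists_round d a ha
    have hDeq : a * (b + j ^ 2 * a + 2 * j * d) - (d + j * a) ^ 2 = a * b - d ^ 2 := by ring
    have := red a (b + j ^ 2 * a + 2 * j * d) (c + k ^ 2 * b + 2 * k * f) (d + j * a)
      (e + k * d) (f + k * b + j * (e + k * d)) ha (by rw [hDeq]; exact hD)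
      (by linear_combination hdet) (by rw [hDeq]; exact hN) hj
      (by
        rw [hDeq]
        convert hk using 2
        ring)
      (x - j * (y - k * z)) (y - k * z) z
    convert this using 1
    unfold TQ; ring

theorem key (n d x a : ℤ) (hn : 2 ≤ n) (hd : 0 < d) (h : x ^ 2 + d = a * (d * n - 1)) :
    SumThree n := by
  have hb : 0 < d * n - 1 := by nlinarith
  have ha : 0 < a := by
    have : 0 < a * (d * n - 1) := by rw [← h]; positivity
    exact pos_of_mul_pos_left this hb.le
  have hD : a * (d * n - 1) - x ^ 2 = d := by linarith
  have := tern_all (a + d).toNat a (d * n - 1) n x 1 0 ha (by rw [hD]; exact hd)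
    (by linear_combination (-n) * h) (by rw [hD]; omega) 0 0 1
  convert this using 1
  unfold TQ; ring

open NumberTheorySymbols in
theorem res_prime (p : ℕ) (d : ℕ) (hp : p.Prime) (h : J(-(d : ℤ) | p) = 1) :
    ∃ x a : ℤ, x ^ 2 + d = a * p := by
  have := Fact.mk hp
  obtain ⟨r, hr⟩ := ZMod.isSquare_of_jacobiSym_eq_one h
  obtain ⟨x, rfl⟩ := ZMod.intCast_surjective r
  have : ((x ^ 2 + d : ℤ) : ZMod p) = 0 := by
    push_cast at hr ⊢
    rw [pow_two, ← hr]; ring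
  rw [ZMod.intCast_zmod_eq_zero_iff_dvd] at this
  obtain ⟨a, ha⟩ := this
  exact ⟨x, a, by rw [ha]; ring⟩

theorem dirichlet (q r : ℕ) (hq : 0 < q) (h : Nat.Coprime r q) :
    ∃ j p : ℕ, p.Prime ∧ p = q * j + r := by
  have : NeZero q := ⟨hq.ne'⟩
  obtain ⟨p, hpr, hp, hmod⟩ := Nat.forall_exists_prime_gt_and_eq_mod
    ((ZMod.isUnit_iff_coprime r q).2 h) r
  rw [ZMod.natCast_eq_natCast_iff] at hmod
  obtain ⟨j, hj⟩ := (Nat.modEq_iff_dvd' hpr.le).1 hmod.symm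
  exact ⟨j, p, hp, by omega⟩

open NumberTheorySymbols in
theorem three_two_mod_four (n : ℕ) (hn : n % 4 = 2) : SumThree n := by
  have hcop : Nat.Coprime (n - 1) (4 * n) := by
    apply Nat.Coprime.mul_right
    · exact (Nat.Coprime.pow_right 2 ((Nat.coprime_two_right).2 (by rw [Nat.odd_iff]; omega)) :
        Nat.Coprime (n - 1) (2 ^ 2))
    · rw [Nat.coprime_comm]
      exact (Nat.coprime_self_sub_right (by omega)).2 (by simp)
  obtain ⟨j, p, hp, hpj⟩ := dirichlet (4 * n) (n - 1) (by omega) hcop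
  have hpd : p + 1 = (4 * j + 1) * n := by
    have : p + 1 = 4 * n * j + n := by omega
    rw [this]; ring
  have hp4 : p % 4 = 1 := by
    have : p = 4 * (n * j) + (n - 1) := by rw [hpj]; ring
    omega
  obtain ⟨d, hd⟩ : ∃ d, d = 4 * j + 1 := ⟨_, rfl⟩
  rw [← hd] at hpd
  have hdodd : Odd d := by rw [Nat.odd_iff]; omega
  have hpodd : Odd p := by rw [Nat.odd_iff]; omega
  have hJ : J(-(d : ℤ) | p) = 1 := by
    rw [jacobiSym.neg _ hpodd, ZMod.χ₄_nat_one_mod_four hp4, one_mul,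
      ← jacobiSym.quadratic_reciprocity_one_mod_four hp4 hdodd,
      jacobiSym.mod_left' (a₂ := -1) (by
        apply Int.ModEq.symm
        rw [Int.modEq_iff_dvd]
        exact ⟨n, by push_cast; have : (p : ℤ) + 1 = d * n := by exact_mod_cast hpd
                     linarith⟩),
      jacobiSym.at_neg_one hdodd, ZMod.χ₄_nat_one_mod_four (by omega)]
  obtain ⟨x, a, hxa⟩ := res_prime p d hp hJ
  refine key n d x a (by omega) (by omega) ?_
  have : (p : ℤ) + 1 = d * n := by exact_mod_cast hpd
  rw [hxa, ← this]; ring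

open NumberTheorySymbols in
theorem three_odd (n c : ℕ) (hn2 : 2 ≤ n)
    (hc : (n % 8 = 1 ∧ c = 3) ∨ (n % 8 = 3 ∧ c = 1) ∨ (n % 8 = 5 ∧ c = 3)) : SumThree n := by
  obtain ⟨r, hr⟩ : ∃ r, 2 * r + 1 = c * n := by
    rcases hc with ⟨h, rfl⟩ | ⟨h, rfl⟩ | ⟨h, rfl⟩
    · exact ⟨(3 * n - 1) / 2, by omega⟩
    · exact ⟨(1 * n - 1) / 2, by omega⟩
    · exact ⟨(3 * n - 1) / 2, by omega⟩
  have hr4 : (n % 8 = 5 ∧ r % 4 = 3) ∨ (n % 8 ≠ 5 ∧ r % 4 = 1) := by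
    rcases hc with ⟨h, rfl⟩ | ⟨h, rfl⟩ | ⟨h, rfl⟩ <;> omega
  have hcop : Nat.Coprime r (4 * n) := by
    apply Nat.Coprime.mul_right
    · exact (Nat.Coprime.pow_right 2 ((Nat.coprime_two_right).2 (by rw [Nat.odd_iff]; omega)) :
        Nat.Coprime r (2 ^ 2))
    · have h1 : Nat.gcd r n ∣ 2 * r + 1 := by
        rw [hr]; exact Dvd.dvd.mul_left (Nat.gcd_dvd_right r n) c
      have h2 : Nat.gcd r n ∣ 2 * r := Dvd.dvd.mul_left (Nat.gcd_dvd_left r n) 2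
      exact Nat.dvd_one.1 ((Nat.dvd_add_right h2).1 h1)
  obtain ⟨j, p, hp, hpj⟩ := dirichlet (4 * n) r (by omega) hcop
  obtain ⟨d, hd⟩ : ∃ d, d = 8 * j + c := ⟨_, rfl⟩
  have hpd : 2 * p + 1 = d * n := by
    have : 2 * p + 1 = 8 * n * j + (2 * r + 1) := by rw [hpj]; ring
    rw [this, hr, hd]; ring
  have hpr : p % 4 = r % 4 := by
    have : p = 4 * (n * j) + r := by rw [hpj]; ring
    omega
  have hdodd : Odd d := by rw [Nat.odd_iff]; omega
  have hpodd : Odd p := by rw [Nat.odd_iff]; omega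
  have hpdz : 2 * (p : ℤ) + 1 = d * n := by exact_mod_cast hpd
  have h2p : J(2 | d) * J(p | d) = J(-1 | d) := by
    rw [← jacobiSym.mul_left]
    apply jacobiSym.mod_left'
    apply Int.ModEq.symm
    rw [Int.modEq_iff_dvd]
    exact ⟨n, by linarith⟩
  rw [jacobiSym.at_two hdodd, jacobiSym.at_neg_one hdodd] at h2p
  have hpJ : J(p | d) = 1 ∧ (d % 8 = 3 ∨ p % 4 = 1) := by
    have h8 : d % 8 = 1 ∧ p % 4 = 1 ∨ d % 8 = 3 := by omega
    rcases h8 with ⟨h8, h9⟩ | h8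
    · rw [ZMod.χ₈_nat_eq_if_mod_eight, ZMod.χ₄_nat_one_mod_four (by omega)] at h2p
      have : d % 2 ≠ 0 := by omega
      simp [h8, this] at h2p
      exact ⟨h2p, by omega⟩
    · rw [ZMod.χ₈_nat_eq_if_mod_eight, ZMod.χ₄_nat_three_mod_four (by omega)] at h2p
      have : d % 2 ≠ 0 := by omega
      simp [h8, this] at h2p
      exact ⟨h2p, by omega⟩
  have hJ : J(-(d : ℤ) | p) = 1 := by
    rw [jacobiSym.neg _ hpodd]
    have hp' : p % 4 = 1 ∨ p % 4 = 3 := by omega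
    rcases hp' with hp4 | hp4
    · rw [ZMod.χ₄_nat_one_mod_four hp4, one_mul,
        ← jacobiSym.quadratic_reciprocity_one_mod_four hp4 hdodd, hpJ.1]
    · rw [ZMod.χ₄_nat_three_mod_four hp4,
        jacobiSym.quadratic_reciprocity_three_mod_four (by omega) hp4, hpJ.1]
      norm_num
  obtain ⟨x, a, hxa⟩ := res_prime p d hp hJ
  -- make `x` odd
  obtain ⟨x', a', hx', hxa'⟩ : ∃ x' a' : ℤ, x' % 2 = 1 ∧ x' ^ 2 + d = a' * p := by
    by_cases hx : x % 2 = 1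
    · exact ⟨x, a, hx, hxa⟩
    · have := Nat.odd_iff.1 hpodd
      exact ⟨x + p, a + 2 * x + p, by omega, by linear_combination hxa⟩
  have hdz : (d : ℤ) % 2 = 1 := by have := Nat.odd_iff.1 hdodd; omega
  have hpz : (p : ℤ) % 2 = 1 := by have := Nat.odd_iff.1 hpodd; omega
  have hev : a' % 2 = 0 := by
    have h1 : (x' ^ 2 + d) % 2 = 0 := by
      rw [Int.add_emod, pow_two, Int.mul_emod, hx', hdz]; norm_num
    rw [hxa', Int.mul_emod, hpz] at h1
    omega
  obtain ⟨t, rfl⟩ := Int.dvd_of_emod_eq_zero hev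
  refine key n d x' t (by omega) (by omega) ?_
  rw [hxa', ← hpdz]; ring

theorem three_squares (n : ℕ) :
    (∀ l k : ℕ, n ≠ 4 ^ l * (8 * k + 7)) → SumThree n := by
  induction n using Nat.strong_induction_on with
  | _ n ih =>
    intro h
    by_cases h0 : n = 0
    · subst h0; exact ⟨0, 0, 0, by norm_num⟩
    by_cases h1 : n = 1
    · subst h1; exact ⟨1, 0, 0, by norm_num⟩
    by_cases h4 : n % 4 = 0
    · obtain ⟨q, rfl⟩ := Nat.dvd_of_mod_eq_zero h4
      obtain ⟨u, v, w, huvw⟩ := ih q (by omega) (by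
        intro l k hq
        exact h (l + 1) k (by rw [hq]; ring))
      exact ⟨2 * u, 2 * v, 2 * w, by push_cast; rw [huvw]; ring⟩
    by_cases h2 : n % 4 = 2
    · exact three_two_mod_four n h2
    have h7 : n % 8 ≠ 7 := fun h7 => h 0 (n / 8) (by omega)
    have h8 : n % 8 = 1 ∨ n % 8 = 3 ∨ n % 8 = 5 := by omega
    rcases h8 with h8 | h8 | h8
    · exact three_odd n 3 (by omega) (by omega)
    · exact three_odd n 1 (by omega) (by omega)
    · exact three_odd n 3 (by omega) (by omega)

theorem polygonal_eq (m x : ℤ) : 2 * polygonal m x = (m - 2) * (x ^ 2 - x) + 2 * x := by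
  unfold polygonal
  have hx : (2 : ℤ) ∣ x ^ 2 - x := by
    have := Int.even_mul_pred_self x
    have := this.two_dvd
    have e : x ^ 2 - x = x * (x - 1) := by ring
    rw [e]; exact this
  have : (2 : ℤ) ∣ (m - 2) * x ^ 2 - (m - 4) * x := by
    obtain ⟨t, ht⟩ := hx
    exact ⟨(m - 2) * t + x, by linear_combination (m - 2) * ht⟩
  rw [Int.mul_ediv_cancel' this]; ring

theorem cauchy_lemma (A B : ℤ) (h : SumThree (8 * A + 4 * B - B ^ 2)) :
    ∃ x y z t : ℤ, x + y + z + t = B ∧ x ^ 2 + y ^ 2 + z ^ 2 + t ^ 2 = 2 * A + B := by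
  obtain ⟨u, v, w, h⟩ := h
  have fin : ∀ u v w : ℤ, 8 * A + 4 * B - B ^ 2 = u ^ 2 + v ^ 2 + w ^ 2 →
      (B + u + v + w) % 4 = 0 → (v + w) % 2 = 0 → (u + w) % 2 = 0 →
      ∃ x y z t : ℤ, x + y + z + t = B ∧ x ^ 2 + y ^ 2 + z ^ 2 + t ^ 2 = 2 * A + B := by
    intro u v w h h4 h2 h3
    obtain ⟨x, hx⟩ : ∃ x, B + u + v + w = 4 * x := ⟨(B + u + v + w) / 4, by omega⟩
    obtain ⟨y, hy⟩ : ∃ y, B + u - v - w = 4 * y := ⟨(B + u - v - w) / 4, by omega⟩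
    obtain ⟨z, hz⟩ : ∃ z, B - u + v - w = 4 * z := ⟨(B - u + v - w) / 4, by omega⟩
    obtain ⟨t, ht⟩ : ∃ t, B - u - v + w = 4 * t := ⟨(B - u - v + w) / 4, by omega⟩
    refine ⟨x, y, z, t, by linarith, ?_⟩
    have : (4 * x) ^ 2 + (4 * y) ^ 2 + (4 * z) ^ 2 + (4 * t) ^ 2 = 16 * (2 * A + B) := by
      rw [← hx, ← hy, ← hz, ← ht]; linear_combination (-4) * h
    linarith
  have sqm : ∀ s : ℤ, (s % 2 = 0 ∧ ∃ q, s ^ 2 = 4 * q ∧ (q - s / 2) % 2 = 0) ∨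
      (s % 2 = 1 ∧ ∃ q, s ^ 2 = 8 * q + 1) := by
    intro s
    rcases Int.emod_two_eq_zero_or_one s with hs | hs
    · left
      refine ⟨hs, ?_⟩
      obtain ⟨r, rfl⟩ := Int.dvd_of_emod_eq_zero hs
      refine ⟨r ^ 2, by ring, ?_⟩
      have := (Int.even_mul_pred_self r).two_dvd
      have h2 : r ^ 2 - 2 * r / 2 = r * (r - 1) := by
        rw [Int.mul_ediv_cancel_left _ (by norm_num)]; ring
      rw [h2]; omega
    · right
      exact ⟨hs, by
        have := Int.eight_dvd_sq_sub_one_of_odd (Int.odd_iff.2 hs)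
        obtain ⟨q, hq⟩ := this
        exact ⟨q, by linarith⟩⟩
  rcases sqm B with ⟨hB, b, hb, hb'⟩ | ⟨hB, b, hb⟩ <;>
  rcases sqm u with ⟨hu, p, hp, hp'⟩ | ⟨hu, p, hp⟩ <;>
  rcases sqm v with ⟨hv, q, hq, hq'⟩ | ⟨hv, q, hq⟩ <;>
  rcases sqm w with ⟨hw, r, hr, hr'⟩ | ⟨hw, r, hr⟩ <;>
  try (exfalso; omega)
  · exact fin u v w h (by omega) (by omega) (by omega)
  · by_cases h4 : (B + u + v + w) % 4 = 0
    · exact fin u v w h h4 (by omega) (by omega)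
    · exact fin u v (-w) (by rw [h]; ring) (by omega) (by omega) (by omega)

theorem rep_1111 (m : ℤ) (hm : 3 ≤ m) (A B : ℤ) (hA : 0 ≤ A)
    (hd : 0 ≤ 8 * A + 4 * B - B ^ 2)
    (hform : ∀ l k : ℕ, 8 * A + 4 * B - B ^ 2 ≠ (4 : ℤ) ^ l * (8 * (k : ℤ) + 7)) :
    ∃ x₁ x₂ x₃ x₄ : ℤ,
      polygonal m x₁ + polygonal m x₂ + polygonal m x₃ + polygonal m x₄ =
        A * (m - 2) + B := by
  have h3 : SumThree (8 * A + 4 * B - B ^ 2) := by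
    obtain ⟨n, hn⟩ := Int.eq_ofNat_of_zero_le hd
    rw [hn]
    apply three_squares
    intro l k h
    apply hform l k
    rw [hn, h]; push_cast; ring
  obtain ⟨x, y, z, t, h1, h2⟩ := cauchy_lemma A B h3
  refine ⟨x, y, z, t, ?_⟩
  have hx := polygonal_eq m x
  have hy := polygonal_eq m y
  have hz := polygonal_eq m z
  have ht := polygonal_eq m t
  have : 2 * (polygonal m x + polygonal m y + polygonal m z + polygonal m t) =
      2 * (A * (m - 2) + B) := by
    linear_combination hx + hy + hz + ht + (m - 2) * h2 - (m - 2) * h1 + 2 * h1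
  linarith
end

section
/- Let m ≥ 3 and let A ≥ 0, B be integers with 10A + 5B - B² ≥ 0 and (A,B) ≢ (0,0) mod 5. Then there exist integers x₁, x₂, x₃, x₄ with P_m(x₁) + P_m(x₂) + P_m(x₃) + 2P_m(x₄) = A(m-2) + B. -/
def h0 (x y z : ℤ) : ℤ := x^2 + y^2 + 2*z^2 + x*y + x*z + y*z

lemma balanced (a b : ℤ) (ha : 0 < a) : ∃ t : ℤ, -a ≤ b + 2*a*t ∧ b + 2*a*t ≤ a := by
  refine ⟨-((b + a) / (2*a)), ?_, ?_⟩
  · have := Int.emod_nonneg (b+a) (show 2*a ≠ 0 by omega)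
    have h2 := Int.emod_add_mul_ediv (b+a) (2*a)
    linarith
  · have := Int.emod_lt_of_pos (b+a) (show 0 < 2*a by omega)
    have h2 := Int.emod_add_mul_ediv (b+a) (2*a)
    linarith

lemma binary_red (k : ℕ) : ∀ p q r : ℤ, p.toNat = k → 0 < p → 0 < p*r - q^2 →
    ∃ α β γ δ : ℤ, α*δ - β*γ = 1 ∧
      0 < p*α^2 + 2*q*α*γ + r*γ^2 ∧
      |2*(p*α*β + q*(α*δ+β*γ) + r*γ*δ)| ≤ p*α^2 + 2*q*α*γ + r*γ^2 ∧
      p*α^2 + 2*q*α*γ + r*γ^2 ≤ p*β^2 + 2*q*β*δ + r*δ^2 := by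
  induction k using Nat.strong_induction_on with
  | _ k ih =>
  intro p q r hk hp hD
  obtain ⟨t, h1, h2⟩ := balanced p (2*q) hp
  set q' := q + p*t with hq'
  set r' := r + 2*q*t + p*t^2 with hr'
  have hD' : p*r' - q'^2 = p*r - q^2 := by rw [hq', hr']; ring
  by_cases hr : p ≤ r'
  · refine ⟨1, t, 0, 1, by ring, by simpa using hp, ?_, ?_⟩
    · rw [abs_le]; constructor <;> nlinarith
    · nlinarith
  · have hr0 : 0 < r' := by
      by_contra hneg
      nlinarith [sq_nonneg q']
    obtain ⟨α, β, γ, δ, e1, e2, e3, e4⟩ := ih r'.toNat (by omega) r' (-q') p rfl hr0 (by linarith [hD', mul_comm p r', neg_sq q'])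
    have E1 : p*(-γ+t*α)^2 + 2*q*(-γ+t*α)*α + r*α^2 = r'*α^2 + 2*(-q')*α*γ + p*γ^2 := by
      rw [hq', hr']; ring
    have E2 : p*(-δ+t*β)^2 + 2*q*(-δ+t*β)*β + r*β^2 = r'*β^2 + 2*(-q')*β*δ + p*δ^2 := by
      rw [hq', hr']; ring
    have E3 : p*(-γ+t*α)*(-δ+t*β) + q*((-γ+t*α)*β+(-δ+t*β)*α) + r*α*β
        = r'*α*β + (-q')*(α*δ+β*γ) + p*γ*δ := by
      rw [hq', hr']; ring
    refine ⟨-γ+t*α, -δ+t*β, α, β, by linear_combination e1, ?_, ?_, ?_⟩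
    · rw [E1]; exact e2
    · rw [E1, E3]; exact e3
    · rw [E1, E2]; exact e4

def TF (a d f b c e x y z : ℤ) : ℤ := a*x^2 + d*y^2 + f*z^2 + b*x*y + c*x*z + e*y*z

def DD (a d f b c e : ℤ) : ℤ := 4*a*d*f + b*c*e - a*e^2 - d*c^2 - f*b^2

lemma core_one (d f b c e : ℤ) (hb : |b| ≤ 1) (hc : |c| ≤ 1)
    (h5 : DD 1 d f b c e = 5) (hp : 0 < 4*d - b^2) (hq : |2*(2*e - b*c)| ≤ 4*d - b^2)
    (hr : 4*d - b^2 ≤ 4*f - c^2) (x y z : ℤ) :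
    ∃ x' y' z', h0 x' y' z' = TF 1 d f b c e x y z := by
  have hD : (4*d-b^2)*(4*f-c^2) - (2*e-b*c)^2 = 20 := by
    unfold DD at h5; linear_combination 4*h5
  set p := 4*d - b^2 with hpd
  set q := 2*e-b*c with hqd
  set r := 4*f-c^2 with hrd
  rw [abs_le] at hq hb hc
  have hp5 : p ≤ 5 := by
    by_contra hcon
    nlinarith [mul_nonneg (sub_nonneg.2 hq.2) (by linarith [hq.1] : 0 ≤ 2*q + p), mul_le_mul_of_nonneg_left hr hp.le]
  obtain ⟨hb1, hb2⟩ := hb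
  obtain ⟨hc1, hc2⟩ := hc
  have hq1 : -2 ≤ q := by omega
  have hq2 : q ≤ 2 := by omega
  have key : p = 3 ∧ r = 7 ∧ (q = 1 ∨ q = -1) := by
    have hb' : b^2 = 0 ∨ b^2 = 1 := by interval_cases b <;> simp
    have hc' : c^2 = 0 ∨ c^2 = 1 := by interval_cases c <;> simp
    have hpp : p % 4 = 0 ∨ p % 4 = 3 := by omega
    have hrr : r % 4 = 0 ∨ r % 4 = 3 := by omega
    clear_value p q r
    interval_cases p <;> interval_cases q <;> omega
  obtain ⟨k1, k2, k3⟩ := key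
  have hb0 : b = 1 ∨ b = -1 := by
    interval_cases b <;> omega
  have hc0 : c = 1 ∨ c = -1 := by
    interval_cases c <;> omega
  have hd1 : d = 1 := by rcases hb0 with rfl | rfl <;> omega
  have hf1 : f = 2 := by rcases hc0 with rfl | rfl <;> omega
  have he : e = 0 ∨ e = b*c := by
    rcases hb0 with rfl | rfl <;> rcases hc0 with rfl | rfl <;> omega
  clear_value p q r
  subst hd1 hf1
  rcases he with rfl | rfl
  · refine ⟨x + c*z, b*y, -c*z, ?_⟩
    rcases hb0 with rfl | rfl <;> rcases hc0 with rfl | rfl <;> unfold h0 TF <;> ring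
  · refine ⟨x, b*y, c*z, ?_⟩
    rcases hb0 with rfl | rfl <;> rcases hc0 with rfl | rfl <;> unfold h0 TF <;> ring

lemma classify (k : ℕ) : ∀ a d f b c e : ℤ, a.toNat = k → 0 < a → 0 < 4*a*d - b^2 →
    DD a d f b c e = 5 → ∀ x y z, ∃ x' y' z', h0 x' y' z' = TF a d f b c e x y z := by
  induction k using Nat.strong_induction_on with
  | _ k ih =>
  -- reduced forms
  have core : ∀ a d f b c e : ℤ, a.toNat = k → 0 < a → 0 < 4*a*d - b^2 →
      |2*(2*a*e-b*c)| ≤ 4*a*d - b^2 → 4*a*d-b^2 ≤ 4*a*f - c^2 → |b| ≤ a → |c| ≤ a →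
      DD a d f b c e = 5 → ∀ x y z, ∃ x' y' z', h0 x' y' z' = TF a d f b c e x y z := by
    intro a d f b c e hk ha hp hq hr hb hc h5 x y z
    by_cases hda : d < a
    · have hd0 : 0 < d := by
        by_contra hcon
        nlinarith [sq_nonneg b]
      obtain ⟨x', y', z', h⟩ := ih d.toNat (by omega) d a f b e c rfl hd0 (by linarith [mul_comm a d, mul_assoc 4 a d, mul_assoc 4 d a])
        (by rw [← h5]; unfold DD; ring) y x z
      exact ⟨x', y', z', by rw [h]; unfold TF; ring⟩
    · have hD : (4*a*d-b^2)*(4*a*f-c^2) - (2*a*e-b*c)^2 = 20*a := by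
        unfold DD at h5; linear_combination 4*a*h5
      have hb2 : b^2 ≤ a^2 := by
        rw [← sq_abs b]; exact pow_le_pow_left₀ (abs_nonneg b) hb 2
      have h3 : 3*a^2 ≤ 4*a*d-b^2 := by nlinarith
      have ha1 : a = 1 := by
        set p := 4*a*d-b^2
        set q := 2*a*e-b*c
        set r := 4*a*f-c^2
        clear_value p q r
        rw [abs_le] at hq
        have e1 : 3 * p^2 ≤ 80*a := by
          nlinarith [mul_nonneg (sub_nonneg.2 hq.2) (by linarith [hq.1] : 0 ≤ 2*q + p), mul_le_mul_of_nonneg_left hr hp.le]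
        have e2 : (3*a^2)^2 ≤ p^2 := pow_le_pow_left₀ (by positivity) h3 2
        by_contra hne
        have h2 : 2 ≤ a := by omega
        have e3 : 27 * a^4 ≤ 80 * a := by nlinarith
        have e4 : 8 * a ≤ a^4 := by
          have : (2:ℤ)^3 ≤ a^3 := pow_le_pow_left₀ (by norm_num) h2 3
          nlinarith
        nlinarith
      subst ha1
      exact core_one d f b c e hb hc h5 (by linarith) (by simpa using hq) (by linarith) x y z
  intro a d f b c e hk ha hp h5 x y z
  have hD : (4*a*d-b^2)*(4*a*f-c^2) - (2*a*e-b*c)^2 = 20*a := by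
    unfold DD at h5; linear_combination 4*a*h5
  obtain ⟨α, β, γ, δ, e1, e2, e3, e4⟩ := binary_red _ (4*a*d-b^2) (2*a*e-b*c) (4*a*f-c^2) rfl hp (by linarith)
  obtain ⟨b', hb'⟩ : ∃ b', b' = b*α+c*γ := ⟨_, rfl⟩
  obtain ⟨c', hc'⟩ : ∃ c', c' = b*β+c*δ := ⟨_, rfl⟩
  obtain ⟨d', hd'⟩ : ∃ d', d' = d*α^2+e*α*γ+f*γ^2 := ⟨_, rfl⟩
  obtain ⟨f', hf'⟩ : ∃ f', f' = d*β^2+e*β*δ+f*δ^2 := ⟨_, rfl⟩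
  obtain ⟨e', he'⟩ : ∃ e', e' = 2*d*α*β+e*(α*δ+β*γ)+2*f*γ*δ := ⟨_, rfl⟩
  obtain ⟨t, t1, t2⟩ := balanced a b' ha
  obtain ⟨s, s1, s2⟩ := balanced a c' ha
  have P : 4*a*(d'+b'*t+a*t^2) - (b'+2*a*t)^2 = (4*a*d-b^2)*α^2 + 2*(2*a*e-b*c)*α*γ + (4*a*f-c^2)*γ^2 := by
    rw [hd', hb']; ring
  have R : 4*a*(f'+c'*s+a*s^2) - (c'+2*a*s)^2 = (4*a*d-b^2)*β^2 + 2*(2*a*e-b*c)*β*δ + (4*a*f-c^2)*δ^2 := by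
    rw [hf', hc']; ring
  have Qe : 2*a*(e'+b'*s+c'*t+2*a*s*t) - (b'+2*a*t)*(c'+2*a*s) = (4*a*d-b^2)*α*β + (2*a*e-b*c)*(α*δ+β*γ) + (4*a*f-c^2)*γ*δ := by
    rw [he', hb', hc']; ring
  have D' : DD a (d'+b'*t+a*t^2) (f'+c'*s+a*s^2) (b'+2*a*t) (c'+2*a*s) (e'+b'*s+c'*t+2*a*s*t) = 5 := by
    have : DD a (d'+b'*t+a*t^2) (f'+c'*s+a*s^2) (b'+2*a*t) (c'+2*a*s) (e'+b'*s+c'*t+2*a*s*t) = DD a d f b c e * (α*δ-β*γ)^2 := by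
      rw [he', hb', hc', hd', hf']; unfold DD; ring
    rw [this, h5, e1]; norm_num
  obtain ⟨x', y', z', h⟩ := core a (d'+b'*t+a*t^2) (f'+c'*s+a*s^2) (b'+2*a*t) (c'+2*a*s) (e'+b'*s+c'*t+2*a*s*t) hk ha (by rw [P]; exact e2) (by rw [P, Qe]; exact e3) (by rw [P, R]; exact e4)
    (abs_le.2 ⟨t1, t2⟩) (abs_le.2 ⟨s1, s2⟩) D' (x - t*(δ*y-β*z) - s*(-γ*y+α*z)) (δ*y-β*z) (-γ*y+α*z)
  refine ⟨x', y', z', ?_⟩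
  rw [h]
  have hy : y = α*(δ*y-β*z) + β*(-γ*y+α*z) := by linear_combination (-y)*e1
  have hz : z = γ*(δ*y-β*z) + δ*(-γ*y+α*z) := by linear_combination (-z)*e1
  generalize δ*y-β*z = Y at *
  generalize -γ*y+α*z = Z at *
  rw [hy, hz, he', hb', hc', hd', hf']
  unfold TF; ring

open NumberTheorySymbols in
lemma sq_rep (p e : ℕ) (hp : p.Prime) (hp4 : p % 4 = 3) (he4 : e % 4 = 3)
    (hJ : J((p:ℤ) | e) = 1) : ∃ B C : ℤ, p*C - B^2 = e := by
  have : Fact p.Prime := ⟨hp⟩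
  have hodd : Odd p := Nat.odd_iff.2 (by omega)
  have h1 : J(-(e:ℤ) | p) = 1 := by
    rw [jacobiSym.neg _ hodd, ZMod.χ₄_nat_three_mod_four hp4,
      jacobiSym.quadratic_reciprocity_three_mod_four he4 hp4, hJ]
    norm_num
  obtain ⟨s, hs⟩ := ZMod.isSquare_of_jacobiSym_eq_one h1
  obtain ⟨B, rfl⟩ := ZMod.intCast_surjective s
  have h2 : (((e:ℤ) + B*B : ℤ) : ZMod p) = 0 := by
    push_cast at hs ⊢
    rw [← hs]; ring
  rw [ZMod.intCast_zmod_eq_zero_iff_dvd] at h2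
  obtain ⟨C, hC⟩ := h2
  exact ⟨B, C, by linarith⟩

open NumberTheorySymbols in
lemma rep_coprime (n : ℤ) (hn : 0 < n) (h5 : n % 5 ≠ 0) : ∃ x y z, h0 x y z = n := by
  obtain ⟨N, rfl⟩ := Int.eq_ofNat_of_zero_le hn.le
  have hN : 0 < N := by exact_mod_cast hn
  have hcop : IsCoprime (12*(N:ℤ) - 5) ((80*N : ℕ) : ℤ) := by
    have c1 : IsCoprime (12*(N:ℤ) - 5) 2 := ⟨1, -(6*N-3), by ring⟩
    have c5' : IsCoprime (5:ℤ) (N:ℤ) := by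
      rw [Prime.coprime_iff_not_dvd (by norm_num)]
      omega
    have c5 : IsCoprime (12*(N:ℤ) - 5) 5 := by
      have : IsCoprime (12*(N:ℤ) - 5) 5 ↔ True := by
        rw [isCoprime_comm, Prime.coprime_iff_not_dvd (by norm_num)]
        simp only [iff_true]
        omega
      exact this.2 trivial
    have cN : IsCoprime (12*(N:ℤ) - 5) (N:ℤ) := by
      obtain ⟨u, v, h⟩ := c5'
      exact ⟨-u, v + 12*u, by linear_combination h⟩
    have : ((80*N : ℕ) : ℤ) = 2^4*5*N := by push_cast; ring
    rw [this]
    exact (c1.pow_right.mul_right c5).mul_right cN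
  obtain ⟨p, hpgt, hp, hmod⟩ := Nat.forall_exists_prime_gt_and_zmodEq (12*N) (by positivity) hcop
  obtain ⟨k, hk⟩ := hmod.symm.dvd
  push_cast at hk
  have hk0 : 0 ≤ k := by
    by_contra hneg
    have : (80 * (N:ℤ)) * k ≤ (80*N) * (-1) := mul_le_mul_of_nonneg_left (by omega) (by positivity)
    have : (12 * N : ℤ) < p := by exact_mod_cast hpgt
    linarith
  obtain ⟨K, rfl⟩ := Int.eq_ofNat_of_zero_le hk0
  have hpe : (p:ℤ) = 4*N*((20*K+3 : ℕ):ℤ) - 5 := by push_cast; linear_combination hk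
  have hp4 : p % 4 = 3 := by
    have : (p:ℤ) = 4*(N*((20*K+3 : ℕ):ℤ)) - 5 := by rw [hpe]; ring
    omega
  have hodd : Odd (20*K+3) := Nat.odd_iff.2 (by omega)
  have hJ : J((p:ℤ) | 20*K+3) = 1 := by
    have : J((p:ℤ) | 20*K+3) = J(-((5:ℕ):ℤ) | 20*K+3) := by
      apply jacobiSym.mod_left'
      rw [hpe]
      apply Int.ModEq.symm
      rw [Int.modEq_iff_dvd]
      exact ⟨4*N, by push_cast; ring⟩
    rw [this, jacobiSym.neg _ hodd, ZMod.χ₄_nat_three_mod_four (by omega),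
      jacobiSym.quadratic_reciprocity_one_mod_four (by norm_num) hodd]
    rw [jacobiSym.mod_left]
    have : (((20*K+3 : ℕ):ℤ) % (5:ℕ)) = 3 := by omega
    rw [this]
    norm_num
  obtain ⟨B, C, hBC⟩ := sq_rep p (20*K+3) hp hp4 (by omega) hJ
  have hp0 : (0:ℤ) < p := by exact_mod_cast hp.pos
  obtain ⟨x, y, z, h⟩ := classify _ (N:ℤ) p C 0 1 (2*B) rfl hn (by have := mul_pos hn hp0; linarith)
    (by unfold DD; linear_combination 4*N*hBC - hpe) 1 0 0
  exact ⟨x, y, z, by rw [h]; unfold TF; ring⟩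

open NumberTheorySymbols in
lemma rep_five_aux (n e0 : ℤ) (he0 : e0 = 3 ∨ e0 = 7) (hn : 0 < n) (h5 : (4*n*e0) % 5 = 1) :
    ∃ x y z, h0 x y z = 5*n := by
  obtain ⟨N, rfl⟩ := Int.eq_ofNat_of_zero_le hn.le
  have hN : 0 < N := by exact_mod_cast hn
  obtain ⟨r, hr⟩ : ∃ r, 4*(N:ℤ)*e0 - 1 = 5*r := ⟨(4*(N:ℤ)*e0 - 1)/5, by omega⟩
  have hcop : IsCoprime r ((16*N : ℕ) : ℤ) := by
    have c1 : IsCoprime r 2 := by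
      refine ⟨-5, 2*N*e0, by linear_combination hr⟩
    have cN : IsCoprime r (N:ℤ) := ⟨-5, 4*e0, by linear_combination hr⟩
    have : ((16*N : ℕ) : ℤ) = 2^4*N := by push_cast; ring
    rw [this]
    exact c1.pow_right.mul_right cN
  obtain ⟨p, hpgt, hp, hmod⟩ := Nat.forall_exists_prime_gt_and_zmodEq (12*N) (by positivity) hcop
  obtain ⟨k, hk⟩ := hmod.symm.dvd
  push_cast at hk
  have hk0 : 0 ≤ k := by
    by_contra hneg
    have : (16 * (N:ℤ)) * k ≤ (16*N) * (-1) := mul_le_mul_of_nonneg_left (by omega) (by positivity)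
    have : (12 * N : ℤ) < p := by exact_mod_cast hpgt
    rcases he0 with rfl | rfl <;> linarith
  obtain ⟨K, rfl⟩ := Int.eq_ofNat_of_zero_le hk0
  obtain ⟨e, he⟩ : ∃ e : ℕ, (e:ℤ) = 20*K+e0 := ⟨(20*K+e0).toNat, by omega⟩
  have hpe : 5*(p:ℤ) = 4*N*e - 1 := by rw [he]; linear_combination 5*hk - hr
  have hp4 : p % 4 = 3 := by
    have : 5*(p:ℤ) = 4*(N*e) - 1 := by rw [hpe]; ring
    omega
  have he4 : e % 4 = 3 := by omega
  have hodd : Odd e := Nat.odd_iff.2 (by omega)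
  have hJ5 : J(((5:ℕ):ℤ) | e) = -1 := by
    rw [jacobiSym.quadratic_reciprocity_one_mod_four (by norm_num) hodd, jacobiSym.mod_left]
    have : ((e:ℤ) % (5:ℕ)) = 3 ∨ ((e:ℤ) % (5:ℕ)) = 2 := by omega
    rcases this with h | h <;> rw [h] <;> norm_num
  have hJ : J((p:ℤ) | e) = 1 := by
    have h1 : J(((5:ℕ):ℤ) * p | e) = J(-1 | e) := by
      apply jacobiSym.mod_left'
      apply Int.ModEq.symm
      rw [Int.modEq_iff_dvd]
      exact ⟨4*N, by push_cast; linear_combination hpe⟩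
    rw [jacobiSym.mul_left, hJ5, jacobiSym.at_neg_one hodd, ZMod.χ₄_nat_three_mod_four he4] at h1
    linarith
  obtain ⟨B, C, hBC⟩ := sq_rep p e hp hp4 he4 hJ
  have hp0 : (0:ℤ) < p := by exact_mod_cast hp.pos
  obtain ⟨x, y, z, h⟩ := classify _ (5*N:ℤ) p C 0 5 (2*B) rfl (by positivity) (by have := mul_pos hn hp0; linarith)
    (by unfold DD; linear_combination 20*N*hBC - 5*hpe) 1 0 0
  exact ⟨x, y, z, by rw [h]; unfold TF; ring⟩

lemma rep_five (n : ℤ) (hn : 0 < n) (h5 : n % 5 = 2 ∨ n % 5 = 3) :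
    ∃ x y z, h0 x y z = 5*n := by
  rcases h5 with h | h
  · exact rep_five_aux n 7 (Or.inr rfl) hn (by omega)
  · exact rep_five_aux n 3 (Or.inl rfl) hn (by omega)

/-- translation of `h0` to the lattice `y₁+y₂+y₃+2y₄=0` -/
lemma to_lattice (N : ℤ) (h : ∃ x y z, h0 x y z = N) :
    ∃ a b c t : ℤ, a + b + c + 2*t = 0 ∧ a^2+b^2+c^2+2*t^2 = 2*N := by
  obtain ⟨x, y, z, rfl⟩ := h
  refine ⟨y + z, x + z, -(x + y), -z, by ring, ?_⟩
  unfold h0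
  ring

lemma poly_eq (m x : ℤ) : 2 * polygonal m x = (m-2)*(x^2-x) + 2*x := by
  unfold polygonal
  have : (2:ℤ) ∣ (m - 2) * x ^ 2 - (m - 4) * x := by
    obtain ⟨c, hc⟩ := (Int.even_mul_succ_self (x-1)).two_dvd
    exact ⟨(m-2)*c + x, by linear_combination (m-2)*hc⟩
  rw [Int.mul_ediv_cancel' this]; ring

lemma finish (m A B a b c t : ℤ) (h1 : a+b+c+2*t = B) (h2 : a^2+b^2+c^2+2*t^2 = 2*A+B) :
    ∃ x₁ x₂ x₃ x₄ : ℤ,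
      polygonal m x₁ + polygonal m x₂ + polygonal m x₃ + 2 * polygonal m x₄ =
        A * (m - 2) + B := by
  refine ⟨a, b, c, t, ?_⟩
  have h : 2*(polygonal m a + polygonal m b + polygonal m c + 2 * polygonal m t) = 2*(A * (m - 2) + B) := by
    linear_combination poly_eq m a + poly_eq m b + poly_eq m c + 2*poly_eq m t + (m-2)*(h2-h1) + 2*h1
  linarith

/-- anisotropy modulo 5 -/
lemma mod5 (a b c t : ℤ) (h1 : a+b+c+2*t = 0) (h2 : (a^2+b^2+c^2+2*t^2) % 5 = 0) :
    (5:ℤ) ∣ a - t ∧ (5:ℤ) ∣ b - t ∧ (5:ℤ) ∣ c - t := by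
  have key : ∀ a b c t : ZMod 5, a+b+c+2*t = 0 → a^2+b^2+c^2+2*t^2 = 0 → a - t = 0 ∧ b - t = 0 ∧ c - t = 0 := by
    decide
  have := key a b c t (by exact_mod_cast congrArg (Int.cast : ℤ → ZMod 5) h1)
    (by
      have := (ZMod.intCast_zmod_eq_zero_iff_dvd (a^2+b^2+c^2+2*t^2) 5).2 (Int.dvd_of_emod_eq_zero h2)
      exact_mod_cast this)
  refine ⟨?_, ?_, ?_⟩
  · exact (ZMod.intCast_zmod_eq_zero_iff_dvd _ 5).1 (by push_cast; exact this.1)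
  · exact (ZMod.intCast_zmod_eq_zero_iff_dvd _ 5).1 (by push_cast; exact this.2.1)
  · exact (ZMod.intCast_zmod_eq_zero_iff_dvd _ 5).1 (by push_cast; exact this.2.2)

theorem rep_1112 (m : ℤ) (hm : 3 ≤ m) (A B : ℤ) (hA : 0 ≤ A)
    (hd : 0 ≤ 10 * A + 5 * B - B ^ 2)
    (hmod : ¬ (A % 5 = 0 ∧ B % 5 = 0)) :
    ∃ x₁ x₂ x₃ x₄ : ℤ,
      polygonal m x₁ + polygonal m x₂ + polygonal m x₃ + 2 * polygonal m x₄ =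
        A * (m - 2) + B := by
  by_cases hB : B % 5 = 0
  · obtain ⟨k, rfl⟩ := Int.dvd_of_emod_eq_zero hB
    obtain ⟨j, hj⟩ := (Int.even_mul_succ_self (k-1)).two_dvd
    have hj' : k^2 - k = 2*j := by linear_combination hj
    have hA5 : A % 5 ≠ 0 := fun h => hmod ⟨h, hB⟩
    have hpos : 0 < A - 5*j := by
      have : 0 ≤ A - 5*j := by nlinarith
      omega
    obtain ⟨a, b, c, t, e1, e2⟩ := to_lattice _ (rep_coprime (A-5*j) hpos (by omega))
    exact finish m A (5*k) (a+k) (b+k) (c+k) (t+k) (by linear_combination e1)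
      (by linear_combination e2 + 2*k*e1 + 5*hj')
  · obtain ⟨j, hj⟩ := (Int.even_mul_succ_self (B-1)).two_dvd
    have hj' : B^2 - B = 2*j := by linear_combination hj
    -- n = 5A + 2B - j
    have h2n : 2*(5*A + 2*B - j) = 10*A+5*B-B^2 := by linear_combination hj'
    have hm5 : (5*A + 2*B - j) % 5 = 2 ∨ (5*A + 2*B - j) % 5 = 3 := by
      have hBs : B^2 % 5 = 1 ∨ B^2 % 5 = 4 := by
        have : B % 5 = 1 ∨ B % 5 = 2 ∨ B % 5 = 3 ∨ B % 5 = 4 := by omega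
        rcases this with h | h | h | h <;> simp [pow_two, Int.mul_emod, h]
      omega
    obtain ⟨a, b, c, t, e1, e2⟩ := to_lattice _ (rep_five (5*A + 2*B - j) (by omega) hm5)
    have e3 : a^2+b^2+c^2+2*t^2 = 5*(10*A+5*B-B^2) := by rw [e2]; linear_combination 5*h2n
    obtain ⟨⟨a', ha⟩, ⟨b', hb⟩, ⟨c', hc⟩⟩ := mod5 a b c t e1 (by rw [e3]; omega)
    have ha' : a = t + 5*a' := by linarith
    have hb' : b = t + 5*b' := by linarith
    have hc' : c = t + 5*c' := by linarith
    subst ha' hb' hc'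
    have hts : t = -(a'+b'+c') := by linarith
    have e4 : 5*(a'^2+b'^2+c'^2) - t^2 = 10*A+5*B-B^2 := by
      have : 5*(5*(a'^2+b'^2+c'^2) - t^2) = 5*(10*A+5*B-B^2) := by
        linear_combination e3 - 10*t*hts
      linarith
    have hdv : (5:ℤ) ∣ (t - B)*(t + B) := by
      refine ⟨a'^2+b'^2+c'^2 - 2*A - B, ?_⟩
      linear_combination -e4
    rcases (Int.prime_iff_natAbs_prime.2 (by norm_num : Nat.Prime (5:ℤ).natAbs)).dvd_or_dvd hdv with ⟨s, hs⟩ | ⟨s, hs⟩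
    · -- t = B + 5 s : use negatives
      have hB' : B = t - 5*s := by linarith
      subst hB'
      exact finish m A _ (-a'-s) (-b'-s) (-c'-s) (-s) (by linear_combination -hts) (by
        have : 5*((-a'-s)^2+(-b'-s)^2+(-c'-s)^2+2*(-s)^2) = 5*(2*A+(t-5*s)) := by
          linear_combination e4 + 10*s*hts
        linarith)
    · have hB' : B = 5*s - t := by linarith
      subst hB'
      exact finish m A _ (a'+s) (b'+s) (c'+s) s (by linear_combination hts) (by
        have : 5*((a'+s)^2+(b'+s)^2+(c'+s)^2+2*s^2) = 5*(2*A+(5*s-t)) := by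
          linear_combination e4 + 10*s*hts
        linarith)
end

section
/- Let m ≥ 3 with m - 4 ≤ 6, i.e., m ∈ {3,4,5,6,7,8,9,10}. Then the m-gonal form ⟨1,1,1,1,2⟩_m given by P_m(x₁)+P_m(x₂)+P_m(x₃)+P_m(x₄)+2P_m(x₅) is universal: it represents every positive integer. -/
/-- The integral ternary form with Gram matrix `[[a,t,s],[t,b,r],[s,r,c]]` takes only values that
are sums of three squares. -/
def TernRep (a b c r s t : ℤ) : Prop :=
  ∀ x y z : ℤ, ∃ u v w : ℤ,
    a * x ^ 2 + b * y ^ 2 + c * z ^ 2 + 2 * r * y * z + 2 * s * x * z + 2 * t * x * y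
      = u ^ 2 + v ^ 2 + w ^ 2

theorem exists_round_s14 (t a : ℤ) (ha : 0 < a) : ∃ q : ℤ, 2 * |t - q * a| ≤ a := by
  refine ⟨(2 * t + a) / (2 * a), ?_⟩
  have h1 := Int.mul_ediv_add_emod (2 * t + a) (2 * a)
  have h2 := Int.emod_nonneg (2 * t + a) (show 2 * a ≠ 0 by omega)
  have h3 := Int.emod_lt_of_pos (2 * t + a) (show 0 < 2 * a by omega)
  generalize (2 * t + a) / (2 * a) = q at *
  generalize (2 * t + a) % (2 * a) = e at *
  have : 2 * (t - q * a) = e - a := by linarith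
  rcases abs_cases (t - q * a) with ⟨h, _⟩ | ⟨h, _⟩ <;> rw [h] <;> linarith

theorem tern_of_reduced_step (a b c r s t : ℤ) (ha : 0 < a) (hA : 0 < a * b - t ^ 2)
    (hdet : a * b * c + 2 * r * s * t - a * r ^ 2 - b * s ^ 2 - c * t ^ 2 = 1)
    (ht : 2 * |t| ≤ a) (hs : 2 * |s| ≤ a) (hB : 2 * |a * r - s * t| ≤ a * b - t ^ 2)
    (hba : a ≤ b) (hCA : a * b - t ^ 2 ≤ a * c - s ^ 2) : TernRep a b c r s t := by
  have key : (a * b - t ^ 2) * (a * c - s ^ 2) = (a * r - s * t) ^ 2 + a := by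
    linear_combination a * hdet
  have hB2 : 4 * (a * r - s * t) ^ 2 ≤ (a * b - t ^ 2) ^ 2 := by
    rw [← sq_abs (a * r - s * t)]
    nlinarith [abs_nonneg (a * r - s * t)]
  have ht2 : 4 * t ^ 2 ≤ a ^ 2 := by
    rw [← sq_abs t]
    nlinarith [abs_nonneg t]
  obtain ⟨A, hAdef⟩ : ∃ A, A = a * b - t ^ 2 := ⟨_, rfl⟩
  rw [← hAdef] at hA key hB2 hB hCA
  have h1 : 3 * A ^ 2 ≤ 4 * a := by nlinarith
  have h2 : 3 * a ^ 2 ≤ 4 * A := by nlinarith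
  have ha1 : a = 1 := by
    by_contra hne
    have ha2 : 2 ≤ a := by omega
    have : 3 ≤ A := by nlinarith
    nlinarith
  subst ha1
  have hA1 : A = 1 := by nlinarith
  have t0 : t = 0 := abs_eq_zero.mp (by have := abs_nonneg t; omega)
  have s0 : s = 0 := abs_eq_zero.mp (by have := abs_nonneg s; omega)
  subst t0 s0
  have hb1 : b = 1 := by linarith
  subst hb1
  have r0 : r = 0 := by
    have := abs_nonneg r
    refine abs_eq_zero.mp ?_
    simp at hB
    omega
  subst r0
  have hc : c = 1 := by linarith
  subst hc
  intro x y z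
  exact ⟨x, y, z, by ring⟩

theorem tern_rep (a b c r s t : ℤ) (ha : 0 < a) (hA : 0 < a * b - t ^ 2)
    (hdet : a * b * c + 2 * r * s * t - a * r ^ 2 - b * s ^ 2 - c * t ^ 2 = 1) :
    TernRep a b c r s t := by
  obtain ⟨k, hk⟩ := exists_round_s14 (a * r - s * t) (a * b - t ^ 2) hA
  obtain ⟨q, hq⟩ := exists_round_s14 t a ha
  obtain ⟨p, hp⟩ := exists_round_s14 (s - k * t) a ha
  obtain ⟨t', ht'⟩ : ∃ t', t' = t - q * a := ⟨_, rfl⟩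
  obtain ⟨s', hs'⟩ : ∃ s', s' = s - k * t - p * a := ⟨_, rfl⟩
  obtain ⟨b', hb'⟩ : ∃ b', b' = b - 2 * q * t + q ^ 2 * a := ⟨_, rfl⟩
  obtain ⟨c', hc'⟩ : ∃ c', c' = (c - 2 * k * r + k ^ 2 * b) - 2 * p * (s - k * t) + p ^ 2 * a :=
    ⟨_, rfl⟩
  obtain ⟨r', hr'⟩ : ∃ r', r' = (r - k * b) - q * (s - k * t) - p * t + p * q * a := ⟨_, rfl⟩
  have eA : a * b' - t' ^ 2 = a * b - t ^ 2 := by subst hb' ht'; ring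
  have eB : a * r' - s' * t' = a * r - s * t - k * (a * b - t ^ 2) := by
    subst hr' hs' ht'; ring
  have hdet' : a * b' * c' + 2 * r' * s' * t' - a * r' ^ 2 - b' * s' ^ 2 - c' * t' ^ 2 = 1 := by
    rw [← hdet]; subst hr' hs' ht' hb' hc'; ring
  rw [← ht'] at hq
  rw [← hs'] at hp
  rw [← eB, ← eA] at hk
  have hA' : 0 < a * b' - t' ^ 2 := by rw [eA]; exact hA
  have hb0 : 0 < b' := by
    by_contra hcon
    nlinarith [sq_nonneg t']
  have hC0 : 0 < a * c' - s' ^ 2 := by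
    have key : (a * b' - t' ^ 2) * (a * c' - s' ^ 2) = (a * r' - s' * t') ^ 2 + a := by
      linear_combination a * hdet'
    by_contra hcon
    nlinarith [sq_nonneg (a * r' - s' * t')]
  have main : TernRep a b' c' r' s' t' := by
    by_cases h1 : b' < a
    · have := tern_rep b' a c' s' r' t' hb0 (by linarith) (by linarith)
      intro x y z
      obtain ⟨u, v, w, h⟩ := this y x z
      exact ⟨u, v, w, by rw [← h]; ring⟩
    · by_cases h2 : a * c' - s' ^ 2 < a * b' - t' ^ 2
      · have := tern_rep a c' b' r' t' s' ha hC0 (by linarith)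
        intro x y z
        obtain ⟨u, v, w, h⟩ := this x z y
        exact ⟨u, v, w, by rw [← h]; ring⟩
      · exact tern_of_reduced_step a b' c' r' s' t' ha hA' hdet' hq hp hk (by omega) (by omega)
  intro x y z
  obtain ⟨u, v, w, h⟩ := main (x + q * (y + k * z) + p * z) (y + k * z) z
  refine ⟨u, v, w, ?_⟩
  rw [← h]
  subst hr' hs' ht' hb' hc'
  ring
termination_by (a.toNat, (a * b - t ^ 2).toNat)
decreasing_by
  · apply Prod.Lex.left; omega
  · apply Prod.Lex.right
    omega

theorem three_sq_of_residue (n d e : ℤ) (hd : 0 < d) (hn : 0 < d * n - 1)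
    (h : d * n - 1 ∣ e ^ 2 + d) : ∃ u v w : ℤ, n = u ^ 2 + v ^ 2 + w ^ 2 := by
  obtain ⟨a, ha⟩ := h
  have ha0 : 0 < a := by
    by_contra hcon
    nlinarith [sq_nonneg e]
  obtain ⟨u, v, w, h⟩ := tern_rep a (d * n - 1) n 0 1 e ha0 (by nlinarith)
    (by linear_combination (-n) * ha) 0 0 1
  exact ⟨u, v, w, by linarith⟩

open NumberTheorySymbols in
theorem three_sq_two_mod_four (n : ℕ) (hn : n % 4 = 2) :
    ∃ u v w : ℤ, (n : ℤ) = u ^ 2 + v ^ 2 + w ^ 2 := by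
  have hcop : Nat.Coprime (n - 1) (4 * n) := by
    have h1 : Nat.Coprime (n - 1) n := by
      have := Nat.coprime_self_sub_left (m := 1) (n := n) (by omega)
      exact this.mpr (Nat.coprime_one_left n)
    have h2 : Nat.Coprime (n - 1) 2 := by
      rw [Nat.coprime_two_right]; exact Nat.odd_iff.mpr (by omega)
    exact Nat.Coprime.mul_right (Nat.Coprime.mul_right h2 h2) h1
  obtain ⟨p, hgt, hp, hmod⟩ := Nat.forall_exists_prime_gt_and_modEq n (q := 4 * n) (by omega) hcop
  obtain ⟨v, hv⟩ := (Nat.modEq_iff_dvd' (by omega)).mp hmod.symm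
  have := Fact.mk hp
  have hd : p + 1 = (4 * v + 1) * n := by
    have : p = 4 * n * v + (n - 1) := by omega
    have h2 : n - 1 + 1 = n := by omega
    rw [this]; linarith
  have hp4 : p % 4 = 1 := by
    have : p = 4 * (n * v) + (n - 1) := by rw [← mul_assoc]; omega
    omega
  have hdp : J(-((4 * v + 1 : ℕ) : ℤ) | p) = 1 := by
    have hpo : Odd p := Nat.odd_iff.mpr (by omega)
    have hdo : Odd (4 * v + 1) := Nat.odd_iff.mpr (by omega)
    rw [jacobiSym.neg _ hpo, ZMod.χ₄_nat_one_mod_four hp4, one_mul,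
      jacobiSym.quadratic_reciprocity_one_mod_four' hdo hp4]
    rw [jacobiSym.mod_left' (a₂ := -1), jacobiSym.at_neg_one hdo,
      ZMod.χ₄_nat_one_mod_four (by omega)]
    apply Int.ModEq.symm
    rw [Int.modEq_iff_dvd]
    exact ⟨n, by push_cast; zify at hd; linarith⟩
  obtain ⟨e, he⟩ := ZMod.isSquare_of_jacobiSym_eq_one hdp
  have hdvd : (p : ℤ) ∣ (e.val : ℤ) ^ 2 + (4 * v + 1 : ℕ) := by
    rw [← ZMod.intCast_zmod_eq_zero_iff_dvd _ p]
    push_cast at he ⊢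
    rw [ZMod.natCast_zmod_val]
    linear_combination -he
  have hpe : ((4 * v + 1 : ℕ) : ℤ) * n - 1 = p := by zify at hd; push_cast; linarith
  exact three_sq_of_residue n ((4 * v + 1 : ℕ) : ℤ) e.val (by positivity)
    (by rw [hpe]; exact_mod_cast hp.pos) (by rw [hpe]; exact hdvd)

open NumberTheorySymbols in
theorem three_sq_three_mod_eight (n : ℕ) (hn : n % 8 = 3) :
    ∃ u v w : ℤ, (n : ℤ) = u ^ 2 + v ^ 2 + w ^ 2 := by
  have hcop : Nat.Coprime ((n - 1) / 2) (4 * n) := by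
    have h1 : Nat.Coprime ((n - 1) / 2) n := by
      have h : Nat.Coprime (n - 1) n :=
        (Nat.coprime_self_sub_left (m := 1) (n := n) (by omega)).mpr (Nat.coprime_one_left n)
      exact Nat.Coprime.coprime_dvd_left (Nat.div_dvd_of_dvd (by omega)) h
    have h2 : Nat.Coprime ((n - 1) / 2) 2 := by
      rw [Nat.coprime_two_right]; exact Nat.odd_iff.mpr (by omega)
    exact Nat.Coprime.mul_right (Nat.Coprime.mul_right h2 h2) h1
  obtain ⟨p, hgt, hp, hmod⟩ := Nat.forall_exists_prime_gt_and_modEq n (q := 4 * n) (by omega) hcop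
  obtain ⟨v, hv⟩ := (Nat.modEq_iff_dvd' (by omega)).mp hmod.symm
  have := Fact.mk hp
  have hd : 2 * p + 1 = (8 * v + 1) * n := by
    have : p = 4 * n * v + ((n - 1) / 2) := by omega
    have h2 : 2 * ((n - 1) / 2) + 1 = n := by omega
    rw [this]; linarith
  have hp4 : p % 4 = 1 := by
    have : p = 4 * (n * v) + ((n - 1) / 2) := by rw [← mul_assoc]; omega
    omega
  have hdp : J(-((8 * v + 1 : ℕ) : ℤ) | p) = 1 := by
    have hpo : Odd p := Nat.odd_iff.mpr (by omega)
    have hdo : Odd (8 * v + 1) := Nat.odd_iff.mpr (by omega)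
    rw [jacobiSym.neg _ hpo, ZMod.χ₄_nat_one_mod_four hp4, one_mul,
      jacobiSym.quadratic_reciprocity_one_mod_four' hdo hp4]
    have h2 : J(2 | 8 * v + 1) = 1 := by
      rw [jacobiSym.at_two hdo, ZMod.χ₈_nat_mod_eight]
      have : (8 * v + 1) % 8 = 1 := by omega
      rw [this]; rfl
    have h3 : J(2 * (p : ℤ) | 8 * v + 1) = 1 := by
      rw [jacobiSym.mod_left' (a₂ := -1), jacobiSym.at_neg_one hdo,
        ZMod.χ₄_nat_one_mod_four (by omega)]
      apply Int.ModEq.symm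
      rw [Int.modEq_iff_dvd]
      exact ⟨n, by push_cast; zify at hd; linarith⟩
    rw [jacobiSym.mul_left, h2, one_mul] at h3
    exact h3
  obtain ⟨e, he⟩ := ZMod.isSquare_of_jacobiSym_eq_one hdp
  have hdvd : (p : ℤ) ∣ (e.val : ℤ) ^ 2 + (8 * v + 1 : ℕ) := by
    rw [← ZMod.intCast_zmod_eq_zero_iff_dvd _ p]
    push_cast at he ⊢
    rw [ZMod.natCast_zmod_val]
    linear_combination -he
  have hpe : ((8 * v + 1 : ℕ) : ℤ) * n - 1 = 2 * p := by zify at hd; push_cast; linarith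
  obtain ⟨f, hf, hfo⟩ : ∃ f : ℤ, (p : ℤ) ∣ f ^ 2 + (8 * v + 1 : ℕ) ∧ f % 2 = 1 := by
    rcases Int.emod_two_eq_zero_or_one (e.val : ℤ) with h | h
    · refine ⟨e.val + p, ?_, by omega⟩
      obtain ⟨g, hg⟩ := hdvd
      exact ⟨g + 2 * e.val + p, by linear_combination hg⟩
    · exact ⟨e.val, hdvd, h⟩
  have h2dvd : (2 : ℤ) * p ∣ f ^ 2 + (8 * v + 1 : ℕ) := by
    apply IsCoprime.mul_dvd _ _ hf
    · rw [Int.isCoprime_iff_gcd_eq_one]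
      have : Nat.Coprime 2 p := by
        rw [Nat.coprime_two_left]; exact Nat.odd_iff.mpr (by omega)
      exact_mod_cast this
    · have : f ^ 2 % 2 = 1 := by rw [pow_two, Int.mul_emod, hfo]; rfl
      push_cast
      omega
  exact three_sq_of_residue n ((8 * v + 1 : ℕ) : ℤ) f (by positivity)
    (by rw [hpe]; have := hp.pos; positivity) (by rw [hpe]; exact h2dvd)

theorem two_mul_polygonal (m x : ℤ) :
    2 * polygonal m x = (m - 2) * x ^ 2 - (m - 4) * x := by
  unfold polygonal
  apply Int.mul_ediv_cancel'
  have h : (2 : ℤ) ∣ x * (x - 1) := by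
    rcases Int.even_or_odd' x with ⟨y, rfl | rfl⟩
    · exact ⟨y * (2 * y - 1), by ring⟩
    · exact ⟨(2 * y + 1) * y, by ring⟩
  obtain ⟨y, hy⟩ := h
  exact ⟨(m - 2) * y + x, by linear_combination (m - 2) * hy⟩

theorem cauchy_odd (a b : ℤ) (hb : b % 2 = 1) (hab : (a - b) % 2 = 0) (h : b ^ 2 ≤ 4 * a) :
    ∃ x y z w : ℤ, x + y + z + w = b ∧ x ^ 2 + y ^ 2 + z ^ 2 + w ^ 2 = a := by
  have hsq : ∀ u : ℤ, (u % 2 = 0 ∧ u ^ 2 % 8 = 0) ∨ (u % 2 = 0 ∧ u ^ 2 % 8 = 4) ∨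
      (u % 2 = 1 ∧ u ^ 2 % 8 = 1) := by
    intro u
    have h8 : u % 8 = 0 ∨ u % 8 = 1 ∨ u % 8 = 2 ∨ u % 8 = 3 ∨ u % 8 = 4 ∨ u % 8 = 5 ∨
      u % 8 = 6 ∨ u % 8 = 7 := by omega
    rcases h8 with h | h | h | h | h | h | h | h <;> simp [pow_two, Int.mul_emod, h] <;> omega
  obtain ⟨n, hn⟩ := Int.eq_ofNat_of_zero_le (show 0 ≤ 4 * a - b ^ 2 by omega)
  obtain ⟨u, v, w, huvw⟩ := three_sq_three_mod_eight n (by have := hsq b; omega)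
  have hu := hsq u
  have hv := hsq v
  have hw := hsq w
  have hb' := hsq b
  have ou : u % 2 = 1 := by omega
  have ov : v % 2 = 1 := by omega
  have ow : w % 2 = 1 := by omega
  obtain ⟨w', hw', hm⟩ : ∃ w', w' ^ 2 = w ^ 2 ∧ (b + u + v + w') % 4 = 0 := by
    by_cases h : (b + u + v + w) % 4 = 0
    · exact ⟨w, rfl, h⟩
    · exact ⟨-w, by ring, by omega⟩
  have ow' : w' % 2 = 1 := by have := hsq w'; omega
  obtain ⟨x, hx⟩ : ∃ x, b + u + v + w' = 4 * x := ⟨(b + u + v + w') / 4, by omega⟩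
  obtain ⟨y, hy⟩ : ∃ x, b + u - v - w' = 4 * x := ⟨(b + u - v - w') / 4, by omega⟩
  obtain ⟨z, hz⟩ : ∃ x, b - u + v - w' = 4 * x := ⟨(b - u + v - w') / 4, by omega⟩
  obtain ⟨t, ht⟩ : ∃ x, b - u - v + w' = 4 * x := ⟨(b - u - v + w') / 4, by omega⟩
  refine ⟨x, y, z, t, by omega, ?_⟩
  have e : (4 * x) ^ 2 + (4 * y) ^ 2 + (4 * z) ^ 2 + (4 * t) ^ 2 = 16 * a := by
    rw [← hx, ← hy, ← hz, ← ht]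
    linear_combination -4 * hn - 4 * huvw + 4 * hw'
  linarith

theorem cauchy_even (c k : ℤ) (hc : c % 2 = 0) (hk : k % 2 = 1) (h : 0 ≤ 2 * c - 2 * k - c ^ 2) :
    ∃ x y z w : ℤ, x + y + z + w = 2 * c ∧ x ^ 2 + y ^ 2 + z ^ 2 + w ^ 2 = 2 * c - 2 * k := by
  obtain ⟨n, hn⟩ := Int.eq_ofNat_of_zero_le h
  have hc4 : c ^ 2 % 4 = 0 := by
    obtain ⟨d, rfl⟩ : ∃ d, c = 2 * d := ⟨c / 2, by omega⟩
    ring_nf; omega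
  obtain ⟨u, v, w, huvw⟩ := three_sq_two_mod_four n (by omega)
  have hsq : ∀ u : ℤ, u ^ 2 % 2 = u % 2 := by
    intro u
    rcases Int.emod_two_eq_zero_or_one u with h | h <;> simp [pow_two, Int.mul_emod, h]
  have hu := hsq u
  have hv := hsq v
  have hw := hsq w
  obtain ⟨x, hx⟩ : ∃ x, c + u + v + w = 2 * x := ⟨(c + u + v + w) / 2, by omega⟩
  obtain ⟨y, hy⟩ : ∃ x, c + u - v - w = 2 * x := ⟨(c + u - v - w) / 2, by omega⟩
  obtain ⟨z, hz⟩ : ∃ x, c - u + v - w = 2 * x := ⟨(c - u + v - w) / 2, by omega⟩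
  obtain ⟨t, ht⟩ : ∃ x, c - u - v + w = 2 * x := ⟨(c - u - v + w) / 2, by omega⟩
  refine ⟨x, y, z, t, by omega, ?_⟩
  have e : (2 * x) ^ 2 + (2 * y) ^ 2 + (2 * z) ^ 2 + (2 * t) ^ 2 = 4 * (2 * c - 2 * k) := by
    rw [← hx, ← hy, ← hz, ← ht]
    linear_combination -4 * hn - 4 * huvw
  linarith

/-- Case of an odd linear sum `b` (here `x₅ = 0`). -/
theorem rep_odd (m N b j : ℤ) (hN : N = (m - 2) * j + b) (hb : b % 2 = 1)
    (h : b ^ 2 ≤ 4 * (2 * j + b)) :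
    ∃ x₁ x₂ x₃ x₄ x₅ : ℤ,
        polygonal m x₁ + polygonal m x₂ + polygonal m x₃ + polygonal m x₄ +
          2 * polygonal m x₅ = N := by
  obtain ⟨x, y, z, w, h1, h2⟩ := cauchy_odd (2 * j + b) b hb (by omega) h
  refine ⟨x, y, z, w, 0, ?_⟩
  have hx := two_mul_polygonal m x
  have hy := two_mul_polygonal m y
  have hz := two_mul_polygonal m z
  have hw := two_mul_polygonal m w
  have h0 := two_mul_polygonal m 0
  have : 2 * (polygonal m x + polygonal m y + polygonal m z + polygonal m w +
          2 * polygonal m 0) = 2 * N := by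
    linear_combination hx + hy + hz + hw + 2 * h0 - 2 * hN + (m - 2) * h2 - (m - 4) * h1
  linarith

/-- Case of an even linear sum `2c` (here `x₅ = t ∈ {0, 1}`). -/
theorem rep_even (m N c k t : ℤ) (ht : t = 0 ∨ t = 1) (hN : N = 2 * t + 2 * c - (m - 2) * k)
    (hc : c % 2 = 0) (hk : k % 2 = 1) (h : 0 ≤ 2 * c - 2 * k - c ^ 2) :
    ∃ x₁ x₂ x₃ x₄ x₅ : ℤ,
        polygonal m x₁ + polygonal m x₂ + polygonal m x₃ + polygonal m x₄ +
          2 * polygonal m x₅ = N := by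
  obtain ⟨x, y, z, w, h1, h2⟩ := cauchy_even c k hc hk h
  refine ⟨x, y, z, w, t, ?_⟩
  have hx := two_mul_polygonal m x
  have hy := two_mul_polygonal m y
  have hz := two_mul_polygonal m z
  have hw := two_mul_polygonal m w
  have h0 : 2 * polygonal m t = 2 * t := by
    rw [two_mul_polygonal]
    rcases ht with rfl | rfl <;> ring
  have : 2 * (polygonal m x + polygonal m y + polygonal m z + polygonal m w +
          2 * polygonal m t) = 2 * N := by
    linear_combination hx + hy + hz + hw + 2 * h0 - 2 * hN + (m - 2) * h2 - (m - 4) * h1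
  linarith

theorem rep_large (m N : ℤ) (hm : 3 ≤ m) (hm' : m - 4 ≤ 6) (hN : 110 ≤ N) :
    ∃ x₁ x₂ x₃ x₄ x₅ : ℤ,
        polygonal m x₁ + polygonal m x₂ + polygonal m x₃ + polygonal m x₄ +
          2 * polygonal m x₅ = N := by
  have hm10 : m ≤ 10 := by omega
  by_cases hpar : m % 2 = 0 ∧ N % 2 = 0
  · obtain ⟨t, c, k, ht, hE, hc, hk, hc1, hc2, hk2⟩ : ∃ t c k : ℤ, (t = 0 ∨ t = 1) ∧
        N = 2 * t + 2 * c - (m - 2) * k ∧ c % 2 = 0 ∧ k % 2 = 1 ∧ -4 ≤ c ∧ c ≤ 4 ∧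
        k ≤ -12 := by
      obtain ⟨g, hg⟩ : ∃ g, m - 2 = 2 * g := ⟨(m - 2) / 2, by omega⟩
      obtain ⟨t, ht, htp⟩ : ∃ t : ℤ, (t = 0 ∨ t = 1) ∧ (N / 2 - t - g) % 2 = 0 := by
        by_cases h : (N / 2 - g) % 2 = 0
        · exact ⟨0, by omega, by omega⟩
        · exact ⟨1, by omega, by omega⟩
      refine ⟨t, (N / 2 - t) % (2 * g) - g, -(2 * ((N / 2 - t) / (2 * g)) + 1), ht, ?_⟩
      have hg1 : 1 ≤ g := by omega
      have hg4 : g ≤ 4 := by omega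
      rw [hg]
      clear hg hm hm'
      interval_cases g <;> omega
    exact rep_even m N c k t ht hE hc hk (by nlinarith)
  · obtain ⟨b, j, hE, hb, hb1, hb2, hj⟩ : ∃ b j : ℤ, N = (m - 2) * j + b ∧ b % 2 = 1 ∧
        -7 ≤ b ∧ b ≤ 7 ∧ 12 ≤ j := by
      by_cases hp : N % (m - 2) % 2 = 1
      · refine ⟨N % (m - 2), N / (m - 2), ?_⟩
        interval_cases m <;> omega
      · refine ⟨N % (m - 2) - (m - 2), N / (m - 2) + 1, ?_⟩
        interval_cases m <;> omega
    exact rep_odd m N b j hE hb (by nlinarith)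

/-- Search for a representation of `N` by values from `L` with weights `1, 1, 1, 1, 2`. -/
def searchRep (L : List ℕ) (N : ℕ) : Bool :=
  L.reverse.any fun e => Nat.ble (2 * e) N &&
    L.any fun a => Nat.ble a (N - 2 * e) &&
      L.any fun b => Nat.ble b (N - 2 * e - a) &&
        L.any fun c => Nat.ble c (N - 2 * e - a - b) &&
          L.any fun d => Nat.beq d (N - 2 * e - a - b - c)

theorem rep_small (m : ℤ) (L : List ℕ) (X : List ℤ)
    (hL : X.map (fun x => polygonal m x) = L.map (fun v : ℕ => (v : ℤ)))
    (hS : ∀ N < 110, searchRep L N = true) (N : ℕ) (hN : N < 110) :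
    ∃ x₁ x₂ x₃ x₄ x₅ : ℤ,
        polygonal m x₁ + polygonal m x₂ + polygonal m x₃ + polygonal m x₄ +
          2 * polygonal m x₅ = N := by
  have hval : ∀ v ∈ L, ∃ x : ℤ, polygonal m x = v := by
    intro v hv
    have : (v : ℤ) ∈ X.map (fun x => polygonal m x) := by
      rw [hL]; exact List.mem_map_of_mem hv
    obtain ⟨x, -, hx⟩ := List.mem_map.mp this
    exact ⟨x, hx⟩
  have h := hS N hN
  simp only [searchRep, Bool.and_eq_true, List.any_eq_true, List.mem_reverse, Nat.ble_eq,
    Nat.beq_eq] at h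
  obtain ⟨e, he, h1, a, ha, h2, b, hb, h3, c, hc, h4, d, hd, h5⟩ := h
  obtain ⟨xe, he⟩ := hval e he
  obtain ⟨xa, ha⟩ := hval a ha
  obtain ⟨xb, hb⟩ := hval b hb
  obtain ⟨xc, hc⟩ := hval c hc
  obtain ⟨xd, hd⟩ := hval d hd
  refine ⟨xa, xb, xc, xd, xe, ?_⟩
  rw [ha, hb, hc, hd, he]
  omega

theorem universal_11112_small_m (m : ℤ) (hm : 3 ≤ m) (hm' : m - 4 ≤ 6) :
    ∀ N : ℤ, 0 < N →
      ∃ x₁ x₂ x₃ x₄ x₅ : ℤ,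
        polygonal m x₁ + polygonal m x₂ + polygonal m x₃ + polygonal m x₄ +
          2 * polygonal m x₅ = N := by
  intro N hN
  by_cases hbig : 110 ≤ N
  · exact rep_large m N hm hm' hbig
  · have hm10 : m ≤ 10 := by omega
    obtain ⟨N, rfl⟩ := Int.eq_ofNat_of_zero_le (show 0 ≤ N by omega)
    have hlt : N < 110 := by omega
    interval_cases m
    · exact rep_small 3 [105, 91, 78, 66, 55, 45, 36, 28, 21, 15, 10, 6, 3, 1, 0]
        [14, 13, 12, 11, 10, 9, 8, 7, 6, 5, 4, 3, 2, 1, 0]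
        (by decide +kernel) (by decide +kernel) N hlt
    · exact rep_small 4 [100, 81, 64, 49, 36, 25, 16, 9, 4, 1, 0]
        [10, 9, 8, 7, 6, 5, 4, 3, 2, 1, 0]
        (by decide +kernel) (by decide +kernel) N hlt
    · exact rep_small 5 [100, 92, 77, 70, 57, 51, 40, 35, 26, 22, 15, 12, 7, 5, 2, 1, 0]
        [-8, 8, -7, 7, -6, 6, -5, 5, -4, 4, -3, 3, -2, 2, -1, 1, 0]
        (by decide +kernel) (by decide +kernel) N hlt
    · exact rep_small 6 [105, 91, 78, 66, 55, 45, 36, 28, 21, 15, 10, 6, 3, 1, 0]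
        [-7, 7, -6, 6, -5, 5, -4, 4, -3, 3, -2, 2, -1, 1, 0]
        (by decide +kernel) (by decide +kernel) N hlt
    · exact rep_small 7 [99, 81, 70, 55, 46, 34, 27, 18, 13, 7, 4, 1, 0]
        [-6, 6, -5, 5, -4, 4, -3, 3, -2, 2, -1, 1, 0]
        (by decide +kernel) (by decide +kernel) N hlt
    · exact rep_small 8 [96, 85, 65, 56, 40, 33, 21, 16, 8, 5, 1, 0]
        [6, -5, 5, -4, 4, -3, 3, -2, 2, -1, 1, 0]
        (by decide +kernel) (by decide +kernel) N hlt
    · exact rep_small 9 [100, 75, 66, 46, 39, 24, 19, 9, 6, 1, 0]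
        [-5, 5, -4, 4, -3, 3, -2, 2, -1, 1, 0]
        (by decide +kernel) (by decide +kernel) N hlt
    · exact rep_small 10 [85, 76, 52, 45, 27, 22, 10, 7, 1, 0]
        [5, -4, 4, -3, 3, -2, 2, -1, 1, 0]
        (by decide +kernel) (by decide +kernel) N hlt
end
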